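/- The collection of all roots of node reliability polynomials is dense in the complex plane: for every z ∈ ℂ and every ε > 0 there exist a finite simple graph G (which may be taken connected) and a complex number w with |w − z| < ε and NRel(G; w) = 0. -/

import Mathlib

open scoped Classical

/-- The number of connected sets (nonempty vertex subsets inducing a connected
subgraph) of order `k` in the finite simple graph `G`. -/
noncomputable def connCount {V : Type*} [Fintype V] (G : SimpleGraph V) (k : ℕ) : ℕ :=
  (Finset.univ.filter fun S : Finset V =>
    S.card = k ∧ (G.induce (S : Set V)).Connected).card

/-- The node reliability polynomial `NRel(G;p) = ∑_{k=1}^n c_k p^k (1-p)^(n-k)`,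
at a complex argument. -/
noncomputable def nodeRel {V : Type*} [Fintype V] (G : SimpleGraph V) (p : ℂ) : ℂ :=
  ∑ k ∈ Finset.Icc 1 (Fintype.card V),
    (connCount G k : ℂ) * p ^ k * (1 - p) ^ (Fintype.card V - k)

/-!
Write `q = 1 - p`. Replacing every vertex of `G` by a clique of order `m` replaces `q` by `q ^ m`
in the node reliability polynomial, so every `m`-th root of a root of `NRel(G)` in `q` is again such
a root for a larger graph. For odd `n`, the polynomial of the `n`-cycle has a root `q` in
`(-t, 0)` and one in `(-∞, -t)` as soon as `n` is large with respect to `t > 0`; and the `m`-th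
roots of a set of complex numbers whose absolute values accumulate at both `0` and `∞` are dense.
-/

open Finset SimpleGraph

/-! ### Bernoulli weights and clique blow-ups -/

lemma eq_of_forall_sum_powerset_eq {α M : Type*} [AddCommGroup M] {g h : Finset α → M}
    (H : ∀ T : Finset α, ∑ S ∈ T.powerset, g S = ∑ S ∈ T.powerset, h S) : g = h := by
  funext T
  induction T using Finset.strongInduction with
  | H T ih =>
    have hT := H T
    rw [← insert_erase (mem_powerset_self T), sum_insert (notMem_erase _ _),
      sum_insert (notMem_erase _ _)] at hT
    have hproper : ∑ S ∈ T.powerset.erase T, g S = ∑ S ∈ T.powerset.erase T, h S :=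
      sum_congr rfl fun S hS => ih S <|
        (mem_powerset.1 (mem_of_mem_erase hS)).ssubset_of_ne (ne_of_mem_erase hS)
    rwa [hproper, add_left_inj] at hT

lemma card_filter_apply_mem {V W : Type*} [Fintype W] {f : W → V} {m : ℕ}
    (hf : ∀ v, #{w | f w = v} = m) (T : Finset V) :
    #{w | f w ∈ T} = #T * m := by
  rw [card_eq_sum_card_fiberwise (f := f) (t := T) fun w hw => by simpa using hw]
  refine sum_const_nat fun v hv => ?_
  rw [← hf v, filter_filter, filter_congr fun w _ => and_iff_right_of_imp fun h => h ▸ hv]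

section Weight

variable {V W R : Type*} [Fintype V] [Fintype W] [CommRing R]

/-- The Bernoulli weight of `S`: for `p ∈ [0, 1]`, the probability that `S` is the set of
operational vertices when each vertex is operational with probability `p`, independently. -/
def bernoulliWeight (p : R) (S : Finset V) : R :=
  p ^ #S * (1 - p) ^ (Fintype.card V - #S)

lemma sum_powerset_bernoulliWeight (p : R) (T : Finset V) :
    ∑ S ∈ T.powerset, bernoulliWeight p S = (1 - p) ^ (Fintype.card V - #T) := by
  have hsplit : ∀ S ∈ T.powerset, bernoulliWeight p S =
      p ^ #S * (1 - p) ^ (#T - #S) * (1 - p) ^ (Fintype.card V - #T) := by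
    intro S hS
    have hST := card_le_card (mem_powerset.1 hS)
    have hT := card_le_univ T
    rw [bernoulliWeight, mul_assoc, ← pow_add]
    congr 2
    omega
  rw [sum_congr rfl hsplit, ← sum_mul, sum_pow_mul_eq_add_pow, add_sub_cancel, one_pow, one_mul]

-- Both sides have the same sums over `T.powerset`: there, each of the `m * #Tᶜ` elements lying
-- over `Tᶜ` is absent.
lemma sum_bernoulliWeight_image_eq {f : W → V} {m : ℕ} (hf : ∀ v, #{w | f w = v} = m)
    (p : R) (T : Finset V) :
    ∑ S : Finset W with S.image f = T, bernoulliWeight p S =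
      bernoulliWeight (1 - (1 - p) ^ m) T := by
  refine congrFun (eq_of_forall_sum_powerset_eq (g := fun T =>
    ∑ S : Finset W with S.image f = T, bernoulliWeight p S) fun T => ?_) T
  have hcard : Fintype.card W = Fintype.card V * m := by simpa using card_filter_apply_mem hf univ
  rw [sum_powerset_bernoulliWeight, sub_sub_cancel, ← pow_mul, mul_comm, Nat.sub_mul, ← hcard,
    ← card_filter_apply_mem hf, ← sum_powerset_bernoulliWeight,
    ← sum_fiberwise_of_maps_to (t := T.powerset) (g := fun S : Finset W => S.image f)]
  · refine sum_congr rfl fun U hU => sum_congr ?_ fun _ _ => rfl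
    ext S
    simp only [mem_filter, mem_univ, true_and, mem_powerset, iff_and_self]
    rintro rfl w hw
    simpa using mem_powerset.1 hU (mem_image_of_mem f hw)
  · intro S hS
    rw [mem_powerset, image_subset_iff]
    intro w hw
    simpa using mem_powerset.1 hS hw

end Weight

section Blowup

variable {V W : Type*}

/-- The graph on `W` obtained from `G` by replacing each vertex `v` by a clique on the fibre
`f ⁻¹' {v}`, all vertices of the cliques replacing two adjacent vertices being joined. -/
def cliqueBlowup (G : SimpleGraph V) (f : W → V) : SimpleGraph W where
  Adj x y := x ≠ y ∧ (f x = f y ∨ G.Adj (f x) (f y))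
  symm := ⟨fun _ _ h => ⟨h.1.symm, h.2.imp Eq.symm Adj.symm⟩⟩
  loopless := ⟨fun _ h => h.1 rfl⟩

lemma connected_cliqueBlowup_iff (G : SimpleGraph V) {f : W → V} (hf : f.Surjective) :
    (cliqueBlowup G f).Connected ↔ G.Connected := by
  obtain ⟨g, hg⟩ := hf.hasRightInverse
  let sectionHom : G →g cliqueBlowup G f :=
    ⟨g, fun {a b} h => ⟨fun hab => h.ne (by rw [← hg a, hab, hg b]), Or.inr (by rwa [hg, hg])⟩⟩
  constructor
  · intro h
    have hreach : ∀ x y, (cliqueBlowup G f).Reachable x y → G.Reachable (f x) (f y) := by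
      rintro x y ⟨w⟩
      induction w with
      | nil => rfl
      | cons hadj _ ih => exact (hadj.2.elim (fun e => e ▸ .rfl) Adj.reachable).trans ih
    have := h.nonempty.map f
    exact ⟨fun a b => by simpa only [hg _] using hreach _ _ (h.preconnected (g a) (g b))⟩
  · intro h
    have hfiber : ∀ x y, f x = f y → (cliqueBlowup G f).Reachable x y := by
      intro x y hxy
      rcases eq_or_ne x y with rfl | hne
      · rfl
      · exact Adj.reachable ⟨hne, Or.inl hxy⟩
    have := h.nonempty.map g
    exact ⟨fun x y => (hfiber x (g (f x)) (hg _).symm).trans <|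
      ((h.preconnected (f x) (f y)).map sectionHom).trans (hfiber _ _ (hg _))⟩

lemma connected_induce_cliqueBlowup_iff (G : SimpleGraph V) (f : W → V) (S : Set W) :
    ((cliqueBlowup G f).induce S).Connected ↔ (G.induce (f '' S)).Connected := by
  have hinduce : (cliqueBlowup G f).induce S =
      cliqueBlowup (G.induce (f '' S)) (Set.imageFactorization f S) := by
    ext x y
    simp [cliqueBlowup, Set.imageFactorization, Subtype.ext_iff]
  rw [hinduce, connected_cliqueBlowup_iff _ Set.imageFactorization_surjective]

variable [Fintype V] [Fintype W]

lemma nodeRel_eq_sum_bernoulliWeight (G : SimpleGraph V) (p : ℂ) :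
    nodeRel G p =
      ∑ S ∈ {S : Finset V | (G.induce (S : Set V)).Connected}, bernoulliWeight p S := by
  rw [nodeRel, ← sum_fiberwise_of_maps_to (g := card) (t := Icc 1 (Fintype.card V))]
  · refine sum_congr rfl fun k _ => ?_
    rw [sum_congr rfl (g := fun _ => p ^ k * (1 - p) ^ (Fintype.card V - k)), sum_const,
      connCount, filter_filter, nsmul_eq_mul, mul_assoc]
    · simp only [and_comm]
    · intro S hS
      rw [bernoulliWeight, (mem_filter.1 hS).2]
  · intro S hS
    obtain ⟨v, hv⟩ := (mem_filter.1 hS).2.nonempty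
    exact mem_Icc.2 ⟨card_pos.2 ⟨v, hv⟩, card_le_univ S⟩

lemma nodeRel_cliqueBlowup (G : SimpleGraph V) {f : W → V} {m : ℕ}
    (hf : ∀ v, #{w | f w = v} = m) (p : ℂ) :
    nodeRel (cliqueBlowup G f) p = nodeRel G (1 - (1 - p) ^ m) := by
  have hconn : ∀ S : Finset W, ((cliqueBlowup G f).induce (S : Set W)).Connected ↔
      (G.induce (S.image f : Set V)).Connected := fun S => by
    rw [coe_image, connected_induce_cliqueBlowup_iff]
  simp only [nodeRel_eq_sum_bernoulliWeight, hconn]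
  rw [← sum_fiberwise_of_maps_to (g := fun S : Finset W => S.image f)
    (t := {T : Finset V | (G.induce (T : Set V)).Connected})]
  · refine sum_congr rfl fun T hT => ?_
    rw [← sum_bernoulliWeight_image_eq hf]
    refine sum_congr ?_ fun _ _ => rfl
    ext S
    simp only [mem_filter, mem_univ, true_and, and_iff_right_iff_imp]
    rintro rfl
    simpa using hT
  · simp

lemma exists_fin_nodeRel_eq_one_sub_pow {G : SimpleGraph V} (hG : G.Connected) {m : ℕ}
    (hm : m ≠ 0) :
    ∃ (N : ℕ) (H : SimpleGraph (Fin N)), H.Connected ∧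
      ∀ p, nodeRel H p = nodeRel G (1 - (1 - p) ^ m) := by
  let e := Fintype.equivFin (V × Fin m)
  let f : Fin (Fintype.card (V × Fin m)) → V := fun x => (e.symm x).1
  have hf : ∀ v, #{x | f x = v} = m := fun v => by
    rw [← card_map e.symm.toEmbedding]
    have : ({x | f x = v} : Finset _).map e.symm.toEmbedding = {v} ×ˢ univ := by
      ext ⟨u, i⟩
      simp [f, eq_comm]
    rw [this]
    simp
  refine ⟨_, cliqueBlowup G f, (connected_cliqueBlowup_iff G fun v => ?_).2 hG,
    nodeRel_cliqueBlowup G hf⟩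
  exact ⟨e (v, ⟨0, hm.bot_lt⟩), by simp [f]⟩

end Blowup

/-! ### Cycles -/

lemma subset_of_connected_induce {V : Type*} {G : SimpleGraph V} {S T : Set V}
    (hS : (G.induce S).Connected) {a : V} (haS : a ∈ S) (haT : a ∈ T)
    (hT : ∀ x ∈ T, ∀ y ∈ S, G.Adj x y → y ∈ T) : S ⊆ T := by
  intro b hb
  by_contra hbT
  obtain ⟨w⟩ := hS.preconnected ⟨a, haS⟩ ⟨b, hb⟩
  obtain ⟨d, -, hd, hd'⟩ := w.exists_boundary_dart (Subtype.val ⁻¹' T) haT hbT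
  exact hd' (hT _ hd _ d.snd.2 d.adj)

lemma connCount_card {V : Type*} [Fintype V] {G : SimpleGraph V} (hG : G.Connected) :
    connCount G (Fintype.card V) = 1 := by
  refine card_eq_one.2 ⟨univ, ext fun S => ?_⟩
  simp only [mem_filter, mem_univ, true_and, mem_singleton, card_eq_iff_eq_univ,
    and_iff_left_iff_imp]
  rintro rfl
  rw [coe_univ]
  exact (induceUnivIso G).connected_iff.2 hG

section Cycle

/-- The cycle on `ZMod n`; unlike `SimpleGraph.cycleGraph`, its vertices form a commutative ring,
so that arcs are images of intervals under the cast from `ℕ`. -/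
def zmodCycle (n : ℕ) : SimpleGraph (ZMod n) :=
  circulantGraph {1}

variable {n : ℕ}

lemma zmodCycle_adj {a b : ZMod n} :
    (zmodCycle n).Adj a b ↔ a ≠ b ∧ (a = b + 1 ∨ b = a + 1) := by
  simp only [zmodCycle, circulantGraph_adj, Set.mem_singleton_iff, sub_eq_iff_eq_add', ne_eq]

/-- The arc of `k` consecutive vertices of the `n`-cycle starting at `i`. -/
def arc (i : ZMod n) (k : ℕ) : Finset (ZMod n) :=
  (range k).image fun j : ℕ => i + j

lemma mem_arc {i a : ZMod n} {k : ℕ} : a ∈ arc i k ↔ ∃ j < k, i + (j : ZMod n) = a := by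
  simp [arc]

lemma add_natCast_mem_arc (i : ZMod n) {j k : ℕ} (hj : j < k) : i + (j : ZMod n) ∈ arc i k :=
  mem_arc.2 ⟨j, hj, rfl⟩

lemma self_mem_arc (i : ZMod n) {k : ℕ} (hk : k ≠ 0) : i ∈ arc i k := by
  simpa using add_natCast_mem_arc i hk.bot_lt

lemma connected_induce_arc (i : ZMod n) {k : ℕ} (hk : k ≠ 0) :
    ((zmodCycle n).induce (arc i k : Set (ZMod n))).Connected := by
  have hreach : ∀ (j : ℕ) (hj : j < k), ((zmodCycle n).induce (arc i k : Set (ZMod n))).Reachable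
      ⟨i, self_mem_arc i hk⟩ ⟨i + j, add_natCast_mem_arc i hj⟩ := by
    intro j
    induction j with
    | zero => simp
    | succ j ih =>
      intro hj
      refine (ih (by omega)).trans ?_
      by_cases h : i + (j : ZMod n) = i + (j + 1 : ℕ)
      · simp [h]
      · refine Adj.reachable ?_
        rw [comap_adj, Function.Embedding.subtype_apply, Function.Embedding.subtype_apply,
          zmodCycle_adj]
        exact ⟨h, Or.inr (by push_cast; ring)⟩
  rw [connected_iff_exists_forall_reachable]
  refine ⟨⟨i, self_mem_arc i hk⟩, ?_⟩
  rintro ⟨a, ha⟩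
  obtain ⟨j, hj, rfl⟩ := mem_arc.1 ha
  exact hreach j hj

lemma card_arc (i : ZMod n) {k : ℕ} (hk : k ≤ n) : #(arc i k) = k := by
  rw [arc, card_image_of_injOn, card_range]
  intro a ha b hb hab
  have hmod := (ZMod.natCast_eq_natCast_iff' a b n).1 (add_left_cancel hab)
  simp only [coe_range, Set.mem_Iio] at ha hb
  rwa [Nat.mod_eq_of_lt (by omega), Nat.mod_eq_of_lt (by omega)] at hmod

lemma sub_one_notMem_arc (i : ZMod n) {k : ℕ} (hk : k < n) : i - 1 ∉ arc i k := by
  rw [mem_arc]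
  rintro ⟨j, hj, hij⟩
  have hdvd : n ∣ j + 1 := by
    rw [← ZMod.natCast_eq_zero_iff]
    push_cast
    linear_combination hij
  have := Nat.le_of_dvd j.succ_pos hdvd
  omega

lemma arc_left_injective {k : ℕ} (hk0 : k ≠ 0) (hk : k < n) :
    Function.Injective fun i : ZMod n => arc i k := by
  intro i i' (h : arc i k = arc i' k)
  obtain ⟨j, hj, hij⟩ := mem_arc.1 (h ▸ self_mem_arc i' hk0 : i' ∈ arc i k)
  cases j with
  | zero => simpa using hij
  | succ j =>
    refine absurd ?_ (sub_one_notMem_arc i' hk)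
    rw [← h, ← hij]
    exact mem_arc.2 ⟨j, by omega, by push_cast; ring⟩

variable [NeZero n]

lemma exists_mem_sub_one_notMem {S : Finset (ZMod n)} (hne : S.Nonempty) (huniv : S ≠ univ) :
    ∃ i ∈ S, i - 1 ∉ S := by
  by_contra! hclosed
  obtain ⟨a, ha⟩ := hne
  have hsub : ∀ j : ℕ, a - j ∈ S := by
    intro j
    induction j with
    | zero => simpa using ha
    | succ j ih => simpa [sub_sub] using hclosed _ ih
  exact huniv (eq_univ_of_forall fun x => by simpa using hsub (a - x).val)

lemma exists_eq_arc {S : Finset (ZMod n)}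
    (hS : ((zmodCycle n).induce (S : Set (ZMod n))).Connected) (huniv : S ≠ univ) :
    ∃ i, S = arc i #S := by
  obtain ⟨⟨a, ha⟩⟩ := hS.nonempty
  obtain ⟨i, hi, hpred⟩ := exists_mem_sub_one_notMem ⟨a, ha⟩ huniv
  have hlast : i + ((-1 : ZMod n).val : ZMod n) ∉ S := by simpa [← sub_eq_add_neg]
  have hexit : ∃ k : ℕ, i + (k : ZMod n) ∉ S := ⟨_, hlast⟩
  let k := Nat.find hexit
  have hk : i + (k : ZMod n) ∉ S := Nat.find_spec hexit
  have hk0 : k ≠ 0 := fun h => hk (by simpa [h] using hi)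
  have harc : arc i k ⊆ S := fun x hx => by
    obtain ⟨j, hj, rfl⟩ := mem_arc.1 hx
    exact not_not.1 (Nat.find_min hexit hj)
  have hclosed : ∀ x ∈ arc i k, ∀ y ∈ S, (zmodCycle n).Adj x y → y ∈ arc i k := by
    intro x hx y hy hxy
    obtain ⟨j, hj, rfl⟩ := mem_arc.1 hx
    rcases (zmodCycle_adj.1 hxy).2 with h | rfl
    · obtain rfl : y = i + j - 1 := by linear_combination -h
      cases j with
      | zero => exact absurd (by simpa using hy) hpred
      | succ j => exact mem_arc.2 ⟨j, by omega, by push_cast; ring⟩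
    · have hsucc : i + (j : ZMod n) + 1 = i + (j + 1 : ℕ) := by push_cast; ring
      rw [hsucc] at hy ⊢
      exact add_natCast_mem_arc i (lt_of_le_of_ne hj fun h => hk (h ▸ hy))
  have hSarc : S = arc i k :=
    (coe_subset.1 (subset_of_connected_induce hS hi (self_mem_arc i hk0) hclosed)).antisymm harc
  have hkn : k ≤ n := (Nat.find_min' hexit hlast).trans (ZMod.val_lt _).le
  exact ⟨i, by rw [hSarc, card_arc i hkn]⟩

lemma connCount_zmodCycle {k : ℕ} (hk0 : k ≠ 0) (hk : k < n) :
    connCount (zmodCycle n) k = n := by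
  have harcs : connCount (zmodCycle n) k = #(univ.image fun i : ZMod n => arc i k) := by
    refine congrArg card (ext fun S => ?_)
    simp only [mem_filter, mem_univ, true_and, mem_image]
    constructor
    · rintro ⟨rfl, hS⟩
      obtain ⟨i, hi⟩ := exists_eq_arc hS (by rintro rfl; simp [ZMod.card] at hk)
      exact ⟨i, hi.symm⟩
    · rintro ⟨i, rfl⟩
      exact ⟨card_arc i hk.le, connected_induce_arc i hk0⟩
  rw [harcs, card_image_of_injective _ (arc_left_injective hk0 hk), card_univ, ZMod.card]

lemma zmodCycle_connected : (zmodCycle n).Connected := by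
  have huniv : arc (0 : ZMod n) n = univ :=
    (card_eq_iff_eq_univ _).1 ((card_arc 0 le_rfl).trans (ZMod.card n).symm)
  have h := connected_induce_arc (0 : ZMod n) (NeZero.ne n)
  rw [huniv, coe_univ] at h
  exact (induceUnivIso _).connected_iff.1 h

lemma nodeRel_zmodCycle (p : ℂ) :
    nodeRel (zmodCycle n) p = p ^ n + n * ∑ j ∈ Ico 1 n, p ^ (n - j) * (1 - p) ^ j := by
  have hn : 1 ≤ n := NeZero.one_le
  have hcard := ZMod.card n
  have htop : connCount (zmodCycle n) n = 1 := by
    simpa only [hcard] using connCount_card (zmodCycle_connected (n := n))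
  have hreflect : ∑ j ∈ Ico 1 n, p ^ (n - j) * (1 - p) ^ j =
      ∑ k ∈ Ico 1 n, p ^ k * (1 - p) ^ (n - k) := by
    have h := sum_Ico_reflect (fun j => p ^ (n - j) * (1 - p) ^ j) 1 n.le_succ
    rw [Nat.add_sub_cancel_left, Nat.add_sub_cancel] at h
    rw [← h]
    exact sum_congr rfl fun k hk => by rw [Nat.sub_sub_self (mem_Ico.1 hk).2.le]
  rw [nodeRel, hcard, ← Ico_insert_right hn, sum_insert right_notMem_Ico, htop, hreflect, mul_sum,
    Nat.cast_one, one_mul, Nat.sub_self, pow_zero, mul_one]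
  refine congrArg _ (sum_congr rfl fun k hk => ?_)
  obtain ⟨hk1, hkn⟩ := mem_Ico.1 hk
  rw [connCount_zmodCycle (by omega) hkn, mul_assoc]

end Cycle

/-! ### Roots for cycles -/

section CycleFactor

/-- The polynomial `1 + n(x + ⋯ + x ^ (n - 1))`, which is the node reliability polynomial of the
`n`-cycle divided by `p ^ n`, as a function of the odds `x = (1 - p) / p`. -/
def cycleFactor {R : Type*} [Semiring R] (n : ℕ) (x : R) : R :=
  1 + n * ∑ j ∈ Ico 1 n, x ^ j

-- Here `p = 1 / (1 + x)`.
lemma nodeRel_zmodCycle_one_sub_div {n : ℕ} [NeZero n] {x : ℂ} (hx : 1 + x ≠ 0) :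
    nodeRel (zmodCycle n) (1 - x / (1 + x)) = cycleFactor n x / (1 + x) ^ n := by
  have hp : 1 - x / (1 + x) = 1 / (1 + x) := by field_simp; ring
  have hterm : ∀ j ∈ Ico 1 n, (1 / (1 + x)) ^ (n - j) * (x / (1 + x)) ^ j =
      x ^ j / (1 + x) ^ n := by
    intro j hj
    rw [div_pow, one_pow, div_pow, div_mul_div_comm, one_mul, ← pow_add,
      Nat.sub_add_cancel (mem_Ico.1 hj).2.le]
  rw [nodeRel_zmodCycle, sub_sub_cancel, hp, sum_congr rfl hterm, ← sum_div, cycleFactor, div_pow,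
    one_pow]
  ring

lemma cycleFactor_neg_one {R : Type*} [Ring R] {n : ℕ} (hn : Odd n) :
    cycleFactor n (-1 : R) = 1 := by
  obtain ⟨k, rfl⟩ := hn
  rw [cycleFactor, sum_Ico_eq_sum_range]
  simp [pow_add]

lemma one_add_mul_cycleFactor_neg {R : Type*} [CommRing R] {n : ℕ} (hn : Odd n) (r : R) :
    (1 + r) * cycleFactor n (-r) = 1 + r - n * (r - r ^ n) := by
  have hgeom := geom_sum_Ico_mul (-r) hn.pos
  rw [hn.neg_pow, pow_one] at hgeom
  rw [cycleFactor]
  linear_combination -(n : R) * hgeom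

lemma exists_cycleFactor_neg_lt_zero {r : ℝ} (hr0 : 0 < r) (hr1 : r < 1) :
    ∃ n, Odd n ∧ cycleFactor n (-r) < 0 := by
  have hgap : 0 < r - r ^ 3 := sub_pos.2 (pow_lt_self_of_lt_one₀ hr0 hr1 (by norm_num))
  obtain ⟨k, hk⟩ := exists_nat_gt ((1 + r) / (r - r ^ 3))
  refine ⟨2 * k + 3, ⟨k + 1, by ring⟩, ?_⟩
  have hpow : r ^ (2 * k + 3) ≤ r ^ 3 := pow_le_pow_of_le_one hr0.le hr1.le (by omega)
  have hlarge : 1 + r < (2 * k + 3 : ℕ) * (r - r ^ (2 * k + 3)) :=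
    calc 1 + r < k * (r - r ^ 3) := (div_lt_iff₀ hgap).1 hk
      _ ≤ (2 * k + 3 : ℕ) * (r - r ^ (2 * k + 3)) := by gcongr; omega
  refine neg_of_mul_neg_left (b := 1 + r) ?_ (by positivity)
  rw [mul_comm, one_add_mul_cycleFactor_neg ⟨k + 1, by ring⟩]
  linarith

lemma exists_cycleFactor_neg_eq_zero {r : ℝ} (hr0 : 0 < r) (hr1 : r < 1) :
    ∃ n, (∃ s ∈ Set.Ioo 0 r, cycleFactor n (-s) = 0) ∧
      ∃ s ∈ Set.Ioo r 1, cycleFactor n (-s) = 0 := by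
  obtain ⟨n, hn, hneg⟩ := exists_cycleFactor_neg_lt_zero hr0 hr1
  have hcont : Continuous fun s : ℝ => cycleFactor n (-s) := by
    unfold cycleFactor
    fun_prop
  have hzero : cycleFactor n (-0 : ℝ) = 1 := by
    rw [cycleFactor, neg_zero, sum_eq_zero, mul_zero, add_zero]
    exact fun j hj => zero_pow (Nat.one_le_iff_ne_zero.1 (mem_Ico.1 hj).1)
  refine ⟨n, intermediate_value_Ioo' hr0.le hcont.continuousOn ⟨hneg, ?_⟩,
    intermediate_value_Ioo hr1.le hcont.continuousOn ⟨hneg, ?_⟩⟩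
  · simp only [hzero, zero_lt_one]
  · simp only [cycleFactor_neg_one hn, zero_lt_one]

/-- The values `q = 1 - p` at the roots `p` of the node reliability polynomials of cycles. -/
def cycleRoots : Set ℂ :=
  {q | ∃ n : ℕ, ∃ _ : NeZero n, nodeRel (zmodCycle n) (1 - q) = 0}

lemma neg_mem_cycleRoots {n : ℕ} {r : ℝ} (hr : r < 1) (h : cycleFactor n (-r) = 0) :
    ((-(r / (1 - r)) : ℝ) : ℂ) ∈ cycleRoots := by
  have : NeZero n := ⟨by rintro rfl; simp [cycleFactor] at h⟩
  have hq : ((-(r / (1 - r)) : ℝ) : ℂ) = ((-r : ℝ) : ℂ) / (1 + ((-r : ℝ) : ℂ)) := by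
    push_cast
    ring
  have hfactor : cycleFactor n ((-r : ℝ) : ℂ) = 0 := by
    rw [← Complex.ofReal_zero, ← h]
    simp [cycleFactor]
  refine ⟨n, this, ?_⟩
  rw [hq, nodeRel_zmodCycle_one_sub_div, hfactor, zero_div]
  exact_mod_cast (by linarith : 1 + -r ≠ 0)

lemma exists_neg_mem_cycleRoots {t : ℝ} (ht : 0 < t) :
    (∃ s ∈ Set.Ioo 0 t, ((-s : ℝ) : ℂ) ∈ cycleRoots) ∧
      ∃ s ∈ Set.Ioi t, ((-s : ℝ) : ℂ) ∈ cycleRoots := by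
  obtain ⟨n, ⟨r, hr, hroot⟩, r', hr', hroot'⟩ := exists_cycleFactor_neg_eq_zero
    (r := t / (1 + t)) (by positivity) ((div_lt_one (by positivity)).2 (by linarith))
  have hlt := hr.2
  have hgt := hr'.1
  rw [lt_div_iff₀ (by positivity)] at hlt
  rw [div_lt_iff₀ (by positivity)] at hgt
  have hr1 : r < 1 := by nlinarith [hr.1]
  have hpos := sub_pos.2 hr1
  have hpos' := sub_pos.2 hr'.2
  refine ⟨⟨r / (1 - r), ⟨div_pos hr.1 hpos, ?_⟩, neg_mem_cycleRoots hr1 hroot⟩,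
    r' / (1 - r'), ?_, neg_mem_cycleRoots hr'.2 hroot'⟩
  · rw [div_lt_iff₀ hpos]
    linarith
  · rw [Set.mem_Ioi, lt_div_iff₀ hpos']
    linarith

lemma zero_mem_closure_cycleRoots : (0 : ℂ) ∈ closure (cycleRoots \ {0}) := by
  rw [Metric.mem_closure_iff]
  intro ε hε
  obtain ⟨⟨s, hs, hmem⟩, -⟩ := exists_neg_mem_cycleRoots hε
  refine ⟨_, ⟨hmem, by simpa using hs.1.ne'⟩, ?_⟩
  rw [dist_zero_left, Complex.norm_real, norm_neg, Real.norm_of_nonneg hs.1.le]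
  exact hs.2

lemma not_isBounded_cycleRoots : ¬ Bornology.IsBounded cycleRoots := by
  rw [isBounded_iff_forall_norm_le]
  rintro ⟨C, hC⟩
  obtain ⟨-, s, hs, hmem⟩ := exists_neg_mem_cycleRoots (t := max C 1) (by positivity)
  have hCs : C < s := (le_max_left _ _).trans_lt hs
  refine (hC _ hmem).not_gt ?_
  rw [Complex.norm_real, norm_neg]
  exact hCs.trans_le (Real.le_norm_self s)

end CycleFactor

/-! ### Density of sets of roots -/

section Density

open Complex

lemma exists_exp_eq_abs_im_sub_le_pi {s : ℂ} (hs : s ≠ 0) (y : ℝ) :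
    ∃ L : ℂ, exp L = s ∧ L.re = Real.log ‖s‖ ∧ |L.im - y| ≤ Real.pi := by
  let k := round ((y - s.arg) / (2 * Real.pi))
  refine ⟨log s + k * (2 * Real.pi * I), ?_, ?_, ?_⟩
  · rw [exp_add, exp_log hs, exp_int_mul_two_pi_mul_I, mul_one]
  · simp [log_re]
  · have him : (log s + k * (2 * Real.pi * I)).im = s.arg + k * (2 * Real.pi) := by
      simp [log_im]
    have hround : s.arg + k * (2 * Real.pi) - y =
        -(2 * Real.pi * ((y - s.arg) / (2 * Real.pi) - k)) := by
      field_simp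
      ring
    rw [him, hround, abs_neg, abs_mul, abs_of_pos Real.two_pi_pos]
    nlinarith [Real.pi_pos, abs_sub_round ((y - s.arg) / (2 * Real.pi))]

-- Take `ξ = L / m` with `m = ⌈log ‖s‖ / Re ζ⌉`, where `L` is the logarithm of `s` whose imaginary
-- part is nearest to `m * Im ζ`.
lemma exists_exp_nat_mul_eq {s ζ : ℂ} (hs : s ≠ 0) (h : 0 < Real.log ‖s‖ / ζ.re) :
    ∃ m : ℕ, m ≠ 0 ∧ ∃ ξ : ℂ, exp (m * ξ) = s ∧
      ‖ξ - ζ‖ ≤ (|ζ.re| + Real.pi) / (Real.log ‖s‖ / ζ.re) := by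
  set y := Real.log ‖s‖ / ζ.re with hy
  have hζ : ζ.re ≠ 0 := fun h0 => by simp [hy, h0] at h
  let m := ⌈y⌉₊
  have hym : y ≤ m := Nat.le_ceil y
  have hmy : (m : ℝ) < y + 1 := Nat.ceil_lt_add_one h.le
  have hm : (0 : ℝ) < m := h.trans_le hym
  have hm0 : (m : ℂ) ≠ 0 := by exact_mod_cast hm.ne'
  obtain ⟨L, hL, hre, him⟩ := exists_exp_eq_abs_im_sub_le_pi hs (m * ζ.im)
  refine ⟨m, (Nat.ceil_pos.2 h).ne', L / m, by rw [mul_div_cancel₀ _ hm0, hL], ?_⟩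
  have hre' : |(L - m * ζ).re| ≤ |ζ.re| := by
    have : (L - m * ζ).re = (y - m) * ζ.re := by
      rw [sub_mul, div_mul_cancel₀ _ hζ, ← hre]
      simp
    rw [this, abs_mul]
    exact mul_le_of_le_one_left (abs_nonneg _) (abs_le.2 ⟨by linarith, by linarith⟩)
  have him' : |(L - m * ζ).im| ≤ Real.pi := by simpa using him
  calc ‖L / m - ζ‖ = ‖L - m * ζ‖ / m := by
        rw [← Complex.norm_natCast m, ← norm_div, sub_div, mul_div_cancel_left₀ _ hm0]
    _ ≤ (|ζ.re| + Real.pi) / m := by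
        gcongr
        exact (norm_le_abs_re_add_abs_im _).trans (add_le_add hre' him')
    _ ≤ (|ζ.re| + Real.pi) / y := by gcongr

lemma exists_lt_log_norm_div {S : Set ℂ} (h0 : (0 : ℂ) ∈ closure (S \ {0}))
    (hS : ¬ Bornology.IsBounded S) {b : ℝ} (hb : b ≠ 0) (C : ℝ) :
    ∃ s ∈ S, s ≠ 0 ∧ C < Real.log ‖s‖ / b := by
  rcases lt_or_gt_of_ne hb with hb | hb
  · obtain ⟨s, ⟨hs, hs0⟩, hlt⟩ := Metric.mem_closure_iff.1 h0 _ (Real.exp_pos (C * b))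
    refine ⟨s, hs, hs0, ?_⟩
    rw [lt_div_iff_of_neg hb, Real.log_lt_iff_lt_exp (norm_pos_iff.2 hs0)]
    simpa using hlt
  · rw [isBounded_iff_forall_norm_le] at hS
    push Not at hS
    obtain ⟨s, hs, hlt⟩ := hS (Real.exp (C * b))
    have hpos : 0 < ‖s‖ := (Real.exp_pos _).trans hlt
    refine ⟨s, hs, norm_pos_iff.1 hpos, ?_⟩
    rwa [lt_div_iff₀ hb, Real.lt_log_iff_exp_lt hpos]

lemma dense_setOf_exp_nat_mul_mem {S : Set ℂ} (h0 : (0 : ℂ) ∈ closure (S \ {0}))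
    (hS : ¬ Bornology.IsBounded S) : Dense {ξ : ℂ | ∃ m : ℕ, m ≠ 0 ∧ exp (m * ξ) ∈ S} := by
  have hre : Dense {ζ : ℂ | ζ.re ≠ 0} := (dense_compl_singleton (0 : ℝ)).preimage isOpenMap_re
  refine Dense.of_closure (hre.mono fun ζ hζ => Metric.mem_closure_iff.2 fun δ hδ => ?_)
  obtain ⟨s, hs, hs0, hlarge⟩ := exists_lt_log_norm_div h0 hS hζ ((|ζ.re| + Real.pi) / δ)
  have hC : 0 < |ζ.re| + Real.pi := by positivity
  have hpos : 0 < Real.log ‖s‖ / ζ.re := (div_pos hC hδ).trans hlarge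
  obtain ⟨m, hm, ξ, hξ, hdist⟩ := exists_exp_nat_mul_eq hs0 hpos
  refine ⟨ξ, ⟨m, hm, hξ ▸ hs⟩, ?_⟩
  rw [dist_eq_norm']
  exact hdist.trans_lt ((div_lt_comm₀ hδ hpos).1 hlarge)

theorem dense_setOf_pow_mem {S : Set ℂ} (h0 : (0 : ℂ) ∈ closure (S \ {0}))
    (hS : ¬ Bornology.IsBounded S) : Dense {w : ℂ | ∃ m : ℕ, m ≠ 0 ∧ w ^ m ∈ S} := by
  have hexp : DenseRange exp := by
    rw [DenseRange, range_exp]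
    exact dense_compl_singleton 0
  refine (hexp.dense_image continuous_exp (dense_setOf_exp_nat_mul_mem h0 hS)).mono ?_
  rintro _ ⟨ξ, ⟨m, hm, hξ⟩, rfl⟩
  exact ⟨m, hm, by rwa [← exp_nat_mul]⟩

end Density

/-- The roots of node reliability polynomials (of connected finite simple graphs) are
dense in the complex plane. -/
theorem nodeRel_roots_dense :
    ∀ (z : ℂ) (ε : ℝ), 0 < ε →
      ∃ (n : ℕ) (G : SimpleGraph (Fin n)), G.Connected ∧
        ∃ w : ℂ, ‖w - z‖ < ε ∧ nodeRel G w = 0 := by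
  intro z ε hε
  obtain ⟨q, ⟨m, hm, n, _, hroot⟩, hq⟩ :=
    (dense_setOf_pow_mem zero_mem_closure_cycleRoots not_isBounded_cycleRoots).exists_dist_lt
      (1 - z) hε
  obtain ⟨N, H, hH, hrel⟩ := exists_fin_nodeRel_eq_one_sub_pow (zmodCycle_connected (n := n)) hm
  refine ⟨N, H, hH, 1 - q, ?_, by rw [hrel, sub_sub_cancel, hroot]⟩
  rwa [sub_right_comm, ← dist_eq_norm]
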